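/- Let t ≥ 0 and let ℓ₁,…,ℓ_k be positive integers with ℓ_r ≥ t for all r. Let (U_{ij}) for 1 ≤ i ≤ m, 1 ≤ j ≤ k be subspaces of a vector space U over a field F satisfying: (i) dim U_{ij} ≤ ℓ_j for all i, j; (ii) for each fixed i and all j ≠ j′, dim(U_{ij} ∩ U_{ij′}) ≤ t; and (iii) for each i < i′ there exist j < j′ with dim(U_{ij} ∩ U_{i′j′}) > t. Then m ≤ (∏_{1 ≤ a < b ≤ k} (ℓ_a + ℓ_b − 2t)!) / (∏_{r=1}^k (ℓ_r − t)!)^{k-1}. -/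

import Mathlib

/-!
The bound equals `∏_{a<b} (ℓ_a + ℓ_b - 2t).choose (ℓ_a - t)`, because each index lies in exactly
`k - 1` pairs (`prod_pairs_mul`).

Base change to the algebraic closure preserves all dimensions involved (`finrank_inf_baseChange`),
so the field may be taken infinite. Then a generic subspace of codimension `t` cuts every `U i j`
and every `U i j ⊓ U i j'` down by `t` dimensions, or to zero (`exists_generic_map`), and no
subspace drops by more than `t`. This reduces the claim to `t = 0` with `ℓ_j - t` in place of `ℓ_j`.

For `t = 0` and a pair `a < b`, a generic linear map to a space of dimension `ℓ_a + ℓ_b` is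
injective on all `U i a ⊔ U i b`. In the target, enlarge the images of `U i a` and `U i b` to
complementary subspaces of dimensions `ℓ_a` and `ℓ_b`, with bases `u i` and `w i`. The matrix
`det [u i | w i']` has nonzero diagonal, vanishes where `U i a` meets `U i' b` nontrivially, and
factors through the `ℓ_a`-th exterior power, whose dimension is `(ℓ_a + ℓ_b).choose ℓ_a`
(`exists_pair_factorization`). The entrywise product of these matrices over all pairs is triangular
with nonzero diagonal, hence of rank `m`, and its rank is at most the product of the binomial
coefficients (`le_prod_choose`).
-/
open Module

/-- Over an infinite field, `N` generic linear functionals cut each of finitely many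
finite-dimensional subspaces down by `N` dimensions, or to zero. With `N` at least the dimension
this says that the generic map to `K ^ N` is injective on the subspace. -/
lemma exists_generic_map {K M ι : Type*} [Field K] [Infinite K] [AddCommGroup M] [Module K M]
    [Finite ι] (S : ι → Submodule K M) (hS : ∀ i, FiniteDimensional K (S i)) (N : ℕ) :
    ∃ φ : M →ₗ[K] (Fin N → K), ∀ i,
      finrank K ↥(S i ⊓ LinearMap.ker φ) ≤ finrank K (S i) - N := by
  induction N with
  | zero => exact ⟨0, fun i => by
      have := hS i
      exact Submodule.finrank_mono inf_le_left⟩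
  | succ N ih =>
    obtain ⟨φ, hφ⟩ := ih
    -- One further functional that vanishes on none of the intersections that are still nonzero.
    have hv : ∀ i : {i // S i ⊓ LinearMap.ker φ ≠ ⊥},
        ∃ v ∈ S i ⊓ LinearMap.ker φ, v ≠ 0 := fun i => Submodule.exists_mem_ne_zero_of_ne_bot i.2
    choose v hvm hv0 using hv
    obtain ⟨f, hf⟩ := Module.exists_dual_forall_apply_ne_zero (K := K) v hv0
    let ψ : M →ₗ[K] (Fin (N + 1) → K) :=
      LinearMap.pi (Fin.cons f (fun j => LinearMap.proj j ∘ₗ φ))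
    have hψ : ∀ x, ψ x = 0 → f x = 0 ∧ φ x = 0 := by
      intro x hx
      refine ⟨by simpa [ψ] using congrFun hx 0, funext fun j => ?_⟩
      simpa [ψ] using congrFun hx j.succ
    refine ⟨ψ, fun i => ?_⟩
    have := hS i
    have hle : S i ⊓ LinearMap.ker ψ ≤ S i ⊓ LinearMap.ker φ :=
      fun x hx => ⟨hx.1, (hψ x hx.2).2⟩
    by_cases hi : S i ⊓ LinearMap.ker φ = ⊥
    · rw [hi, le_bot_iff] at hle
      rw [hle, finrank_bot]
      exact Nat.zero_le _
    · have hlt : S i ⊓ LinearMap.ker ψ < S i ⊓ LinearMap.ker φ := by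
        refine lt_of_le_of_ne hle fun h => hf ⟨i, hi⟩ ?_
        have := hvm ⟨i, hi⟩
        rw [← h] at this
        exact (hψ _ this.2).1
      have h1 := Submodule.finrank_lt_finrank_of_lt hlt
      have h2 := hφ i
      omega

lemma exists_between_finrank {K V : Type*} [Field K] [AddCommGroup V] [Module K V]
    [FiniteDimensional K V] {A C : Submodule K V} (hAC : A ≤ C) {p : ℕ}
    (hA : finrank K A ≤ p) (hC : p ≤ finrank K C) :
    ∃ B : Submodule K V, A ≤ B ∧ B ≤ C ∧ finrank K B = p := by
  induction p, hA using Nat.le_induction with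
  | base => exact ⟨A, le_rfl, hAC, rfl⟩
  | succ p hp ih =>
    obtain ⟨B, hAB, hBC, hB⟩ := ih (by omega)
    have hlt : B < C := lt_of_le_of_ne hBC (by rintro rfl; omega)
    obtain ⟨x, hxC, hxB⟩ := SetLike.exists_of_lt hlt
    have hx0 : x ≠ 0 := by rintro rfl; exact hxB B.zero_mem
    refine ⟨B ⊔ K ∙ x, hAB.trans le_sup_left,
      sup_le hBC ((Submodule.span_singleton_le_iff_mem _ _).2 hxC), ?_⟩
    have h := Submodule.finrank_sup_add_finrank_inf_eq B (K ∙ x)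
    have hd : B ⊓ K ∙ x = ⊥ :=
      ((Submodule.disjoint_span_singleton' hx0).2 hxB).eq_bot
    rw [hd, finrank_bot, finrank_span_singleton hx0] at h
    omega

/-- Disjoint subspaces of dimensions at most `p` and `q` in a space of dimension `p + q` can be
enlarged to complementary subspaces of dimensions exactly `p` and `q`. -/
lemma exists_isCompl_of_finrank {K V : Type*} [Field K] [AddCommGroup V] [Module K V]
    [FiniteDimensional K V] {A B : Submodule K V} {p q : ℕ} (hV : finrank K V = p + q)
    (hA : finrank K A ≤ p) (hB : finrank K B ≤ q) (hAB : Disjoint A B) :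
    ∃ A' B' : Submodule K V, A ≤ A' ∧ B ≤ B' ∧ IsCompl A' B' ∧
      finrank K A' = p ∧ finrank K B' = q := by
  obtain ⟨C, hBC, hC⟩ := hAB.exists_isCompl
  have h1 := Submodule.finrank_add_eq_of_isCompl hC
  obtain ⟨A', hAA', hA'C, hA'⟩ := exists_between_finrank hBC hA (by omega)
  obtain ⟨B', hBB', hB'⟩ := (hC.disjoint.mono_left hA'C).symm.exists_isCompl
  have h2 := Submodule.finrank_add_eq_of_isCompl hB'
  exact ⟨A', B', hAA', hBB', hB'.symm, hA', by omega⟩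

lemma exists_adapted_rows {K V : Type*} [Field K] [AddCommGroup V] [Module K V]
    [FiniteDimensional K V] {A B : Submodule K V} {p q : ℕ} (hV : finrank K V = p + q)
    (hA : finrank K A ≤ p) (hB : finrank K B ≤ q) (hAB : Disjoint A B) :
    ∃ (u : Fin p → V) (w : Fin q → V), LinearIndependent K (Sum.elim u w) ∧
      A ≤ Submodule.span K (Set.range u) ∧ B ≤ Submodule.span K (Set.range w) := by
  obtain ⟨A', B', hA', hB', hc, hp, hq⟩ := exists_isCompl_of_finrank hV hA hB hAB
  have hspan : ∀ {n : ℕ} (W : Submodule K V) (b : Basis (Fin n) K W),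
      Submodule.span K (Set.range fun i => (b i : V)) = W := by
    intro n W b
    have := congrArg (Submodule.map W.subtype) b.span_eq
    rw [Submodule.map_span, ← Set.range_comp, Submodule.map_subtype_top] at this
    exact this
  let bA := finBasisOfFinrankEq K A' hp
  let bB := finBasisOfFinrankEq K B' hq
  refine ⟨fun i => bA i, fun i => bB i, ?_, ?_, ?_⟩
  · refine LinearIndependent.sum_type ?_ ?_ ?_
    · exact bA.linearIndependent.map' A'.subtype (Submodule.ker_subtype _)
    · exact bB.linearIndependent.map' B'.subtype (Submodule.ker_subtype _)
    · rw [hspan, hspan]; exact hc.disjoint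
  · rwa [hspan]
  · rwa [hspan]

/-- The determinant of the square matrix with rows `u` followed by rows `w`, as an alternating map
of the first block of rows `u`. -/
def blockDet {K : Type*} [Field K] {p q : ℕ} (w : Fin q → (Fin p ⊕ Fin q → K)) :
    (Fin p ⊕ Fin q → K) [⋀^Fin p]→ₗ[K] K where
  toFun u := Matrix.detRowAlternating (Sum.elim u w)
  map_update_add' u i x y := by
    have h : ∀ z, Sum.elim (Function.update u i z) w
        = Function.update (Sum.elim u w) (Sum.inl i) z := fun z => by
      convert (Sum.update_elim_inl (f := u) (g := w) (i := i) (x := z)).symm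
    rw [h, h, h, AlternatingMap.map_update_add]
  map_update_smul' u i c x := by
    have h : ∀ z, Sum.elim (Function.update u i z) w
        = Function.update (Sum.elim u w) (Sum.inl i) z := fun z => by
      convert (Sum.update_elim_inl (f := u) (g := w) (i := i) (x := z)).symm
    rw [h, h, AlternatingMap.map_update_smul]
  map_eq_zero_of_eq' u i j huij hij :=
    AlternatingMap.map_eq_zero_of_eq _ _ (i := Sum.inl i) (j := Sum.inl j) (by simpa using huij)
      (by simpa using hij)

lemma blockDet_ne_zero_iff {K : Type*} [Field K] {p q : ℕ} (u : Fin p → (Fin p ⊕ Fin q → K))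
    (w : Fin q → (Fin p ⊕ Fin q → K)) :
    blockDet w u ≠ 0 ↔ LinearIndependent K (Sum.elim u w) := by
  have := Matrix.linearIndependent_rows_iff_isUnit (A := Matrix.of (Sum.elim u w))
  rw [Matrix.isUnit_iff_isUnit_det, isUnit_iff_ne_zero] at this
  exact this.symm

/-- The two-column case over an infinite field: a matrix that factors through a space of dimension
`(p + q).choose p`, has nonzero diagonal, and vanishes at `(i, i')` whenever `A i` and `B i'` meet
nontrivially. -/
lemma exists_pair_factorization {K M : Type*} [Field K] [Infinite K] [AddCommGroup M] [Module K M]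
    {m p q : ℕ} (A B : Fin m → Submodule K M)
    (hfA : ∀ i, FiniteDimensional K (A i)) (hfB : ∀ i, FiniteDimensional K (B i))
    (hA : ∀ i, finrank K (A i) ≤ p) (hB : ∀ i, finrank K (B i) ≤ q)
    (hAB : ∀ i, A i ⊓ B i = ⊥) :
    ∃ (X Y : Fin m → Fin ((p + q).choose p) → K),
      (∀ i, ∑ s, X i s * Y i s ≠ 0) ∧
      ∀ i i', A i ⊓ B i' ≠ ⊥ → ∑ s, X i s * Y i' s = 0 := by
  obtain ⟨φ₀, hφ₀⟩ := exists_generic_map (fun i => A i ⊔ B i) (fun i => inferInstance) (p + q)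
  let e : (Fin (p + q) → K) ≃ₗ[K] (Fin p ⊕ Fin q → K) := LinearEquiv.funCongrLeft K K finSumFinEquiv
  let φ : M →ₗ[K] (Fin p ⊕ Fin q → K) := e.toLinearMap ∘ₗ φ₀
  have hφ : ∀ i, ∀ x ∈ A i ⊔ B i, φ x = 0 → x = 0 := by
    intro i x hx h0
    have h1 : finrank K ↥(A i ⊔ B i) ≤ p + q :=
      (Submodule.finrank_add_le_finrank_add_finrank _ _).trans (Nat.add_le_add (hA i) (hB i))
    have h2 : finrank K ↥((A i ⊔ B i) ⊓ LinearMap.ker φ₀) = 0 := by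
      have := hφ₀ i
      omega
    rw [Submodule.finrank_eq_zero] at h2
    have : x ∈ (A i ⊔ B i) ⊓ LinearMap.ker φ₀ := ⟨hx, by simpa [φ] using h0⟩
    rwa [h2] at this
  have hrows : ∀ i, ∃ (u : Fin p → (Fin p ⊕ Fin q → K)) (w : Fin q → (Fin p ⊕ Fin q → K)),
      LinearIndependent K (Sum.elim u w) ∧
      (A i).map φ ≤ Submodule.span K (Set.range u) ∧
      (B i).map φ ≤ Submodule.span K (Set.range w) := by
    intro i
    refine exists_adapted_rows (by simp) ((Submodule.finrank_map_le _ _).trans (hA i))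
      ((Submodule.finrank_map_le _ _).trans (hB i)) ?_
    rw [Submodule.disjoint_def]
    rintro _ ⟨x, hx, rfl⟩ ⟨y, hy, hxy⟩
    have h : x - y = 0 := hφ i _ (sub_mem (Submodule.mem_sup_left hx) (Submodule.mem_sup_right hy))
      (by rw [map_sub, hxy, sub_self])
    rw [sub_eq_zero] at h
    subst h
    have : x ∈ A i ⊓ B i := ⟨hx, hy⟩
    rw [hAB i, Submodule.mem_bot] at this
    rw [this, map_zero]
  choose u w hli hu hw using hrows
  have hdim : finrank K (⋀[K]^p (Fin p ⊕ Fin q → K)) = (p + q).choose p := by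
    rw [exteriorPower.finrank_eq]; simp
  let b := finBasisOfFinrankEq K _ hdim
  -- Expanding `u i 0 ∧ ⋯ ∧ u i (p - 1)` in a basis of the exterior power factors the matrix of
  -- determinants.
  have key : ∀ i i', ∑ s, b.repr (exteriorPower.ιMulti K p (u i)) s *
      exteriorPower.alternatingMapLinearEquiv (blockDet (w i')) (b s) = blockDet (w i') (u i) := by
    intro i i'
    rw [← exteriorPower.alternatingMapLinearEquiv_apply_ιMulti (blockDet (w i')) (u i)]
    conv_rhs => rw [← b.sum_repr (exteriorPower.ιMulti K p (u i)), map_sum]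
    simp only [map_smul, smul_eq_mul]
  refine ⟨fun i s => b.repr (exteriorPower.ιMulti K p (u i)) s,
    fun i' s => exteriorPower.alternatingMapLinearEquiv (blockDet (w i')) (b s),
    fun i => ?_, fun i i' hne => ?_⟩
  · rw [key]
    exact (blockDet_ne_zero_iff _ _).2 (hli i)
  · rw [key]
    by_contra hdet
    obtain ⟨x, ⟨hxA, hxB⟩, hx0⟩ := Submodule.exists_mem_ne_zero_of_ne_bot hne
    have hd : Disjoint (Submodule.span K (Set.range (u i))) (Submodule.span K (Set.range (w i'))) :=
      (linearIndependent_sum.1 ((blockDet_ne_zero_iff (u i) (w i')).1 hdet)).2.2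
    refine hx0 (hφ i x (Submodule.mem_sup_left hxA) ?_)
    exact Submodule.disjoint_def.1 hd (φ x) (hu i (Submodule.mem_map_of_mem hxA))
      (hw i' (Submodule.mem_map_of_mem hxB))

/-- A triangular `m × m` matrix with nonzero diagonal that factors through a space of dimension
`card S` forces `m ≤ card S`. -/
lemma le_card_of_triangular {K S : Type*} [Field K] [Fintype S] {m : ℕ} (X Y : Fin m → S → K)
    (hd : ∀ i, ∑ s, X i s * Y i s ≠ 0) (hz : ∀ i i', i < i' → ∑ s, X i s * Y i' s = 0) :
    m ≤ Fintype.card S := by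
  classical
  let P : Matrix (Fin m) (Fin m) K := Matrix.of X * (Matrix.of Y).transpose
  have hP : ∀ i i', P i i' = ∑ s, X i s * Y i' s := fun i i' => by
    simp [P, Matrix.mul_apply]
  have hdet : P.det ≠ 0 := by
    rw [Matrix.det_of_isLowerTriangular P (fun i i' h => by rw [hP]; exact hz i i' h)]
    exact Finset.prod_ne_zero_iff.2 fun i _ => by rw [hP]; exact hd i
  have hr : P.rank = m := by
    rw [Matrix.rank_of_isUnit P ((Matrix.isUnit_iff_isUnit_det P).2 hdet.isUnit), Fintype.card_fin]
  calc m = P.rank := hr.symm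
    _ ≤ (Matrix.of X).rank := Matrix.rank_mul_le_left _ _
    _ ≤ Fintype.card S := Matrix.rank_le_card_width _

/-- The bound for threshold `0` over an infinite field. -/
lemma le_prod_choose {K M : Type*} [Field K] [Infinite K] [AddCommGroup M] [Module K M]
    {k m : ℕ} (ℓ : Fin k → ℕ) (U : Fin m → Fin k → Submodule K M)
    (hfd : ∀ i j, FiniteDimensional K (U i j))
    (hdim : ∀ i j, finrank K (U i j) ≤ ℓ j)
    (hdisj : ∀ i, ∀ j j' : Fin k, j ≠ j' → U i j ⊓ U i j' = ⊥)
    (hcross : ∀ i i' : Fin m, i < i' → ∃ j j' : Fin k, j < j' ∧ U i j ⊓ U i' j' ≠ ⊥) :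
    m ≤ ∏ p : {p : Fin k × Fin k // p.1 < p.2},
      (ℓ p.1.1 + ℓ p.1.2).choose (ℓ p.1.1) := by
  classical
  have h := fun p : {p : Fin k × Fin k // p.1 < p.2} =>
    exists_pair_factorization (p := ℓ p.1.1) (q := ℓ p.1.2)
      (fun i => U i p.1.1) (fun i => U i p.1.2)
      (fun i => hfd i _) (fun i => hfd i _) (fun i => hdim i _) (fun i => hdim i _)
      (fun i => hdisj i _ _ p.2.ne)
  choose X Y hd hz using h
  -- The entrywise product of the pair matrices factors through the product of the index sets.
  have key : ∀ i i', ∑ s : (∀ p : {p : Fin k × Fin k // p.1 < p.2},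
      Fin ((ℓ p.1.1 + ℓ p.1.2).choose (ℓ p.1.1))),
      (∏ p, X p i (s p)) * (∏ p, Y p i' (s p)) = ∏ p, ∑ s, X p i s * Y p i' s := by
    intro i i'
    rw [Fintype.prod_sum]
    exact Finset.sum_congr rfl fun s _ => Finset.prod_mul_distrib.symm
  have := le_card_of_triangular
    (fun i (s : ∀ p : {p : Fin k × Fin k // p.1 < p.2},
      Fin ((ℓ p.1.1 + ℓ p.1.2).choose (ℓ p.1.1))) => ∏ p, X p i (s p))
    (fun i s => ∏ p, Y p i (s p)) ?_ ?_
  · simpa [Fintype.card_pi] using this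
  · intro i
    rw [key]
    exact Finset.prod_ne_zero_iff.2 fun p _ => hd p i
  · intro i i' hii'
    rw [key]
    obtain ⟨j, j', hj, hne⟩ := hcross i i' hii'
    have hpair := hz ⟨(j, j'), hj⟩ i i' hne
    exact Finset.prod_eq_zero (Finset.mem_univ _) hpair

/-- The bound for threshold `t` over an infinite field, obtained from threshold `0` by intersecting
with the kernel of a generic map to `K ^ t`. -/
lemma le_prod_choose_threshold {K M : Type*} [Field K] [Infinite K] [AddCommGroup M] [Module K M]
    {k m : ℕ} (t : ℕ) (ℓ : Fin k → ℕ) (U : Fin m → Fin k → Submodule K M)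
    (hfd : ∀ i j, FiniteDimensional K (U i j))
    (hdim : ∀ i j, finrank K (U i j) ≤ ℓ j)
    (hthr : ∀ i, ∀ j j' : Fin k, j ≠ j' → finrank K ↥(U i j ⊓ U i j') ≤ t)
    (hcross : ∀ i i' : Fin m, i < i' →
      ∃ j j' : Fin k, j < j' ∧ t < finrank K ↥(U i j ⊓ U i' j')) :
    m ≤ ∏ p : {p : Fin k × Fin k // p.1 < p.2},
      ((ℓ p.1.1 - t) + (ℓ p.1.2 - t)).choose (ℓ p.1.1 - t) := by
  -- The diagonal triples `(i, j, j)` give the subspaces `U i j` themselves.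
  obtain ⟨φ, hφ⟩ := exists_generic_map
    (fun x : Fin m × Fin k × Fin k => U x.1 x.2.1 ⊓ U x.1 x.2.2) (fun x => inferInstance) t
  refine le_prod_choose (fun j => ℓ j - t) (fun i j => U i j ⊓ LinearMap.ker φ)
    (fun i j => inferInstance) (fun i j => ?_) (fun i j j' hj => ?_) (fun i i' hi => ?_)
  · have h : finrank K ↥(U i j ⊓ U i j ⊓ LinearMap.ker φ) ≤ finrank K ↥(U i j ⊓ U i j) - t :=
      hφ (i, j, j)
    rw [inf_idem] at h
    exact h.trans (Nat.sub_le_sub_right (hdim i j) t)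
  · have h := hφ (i, j, j')
    have h' := hthr i j j' hj
    rw [← inf_inf_distrib_right, ← Submodule.finrank_eq_zero (R := K)]
    simp only at h
    omega
  · obtain ⟨j, j', hj, hlt⟩ := hcross i i' hi
    refine ⟨j, j', hj, fun h0 => ?_⟩
    rw [← inf_inf_distrib_right] at h0
    -- Otherwise `φ` would embed a space of dimension greater than `t` into `K ^ t`.
    have hinj : Function.Injective (φ.domRestrict (U i j ⊓ U i' j')) := by
      rw [← LinearMap.ker_eq_bot, LinearMap.ker_eq_bot']
      intro x hx
      have : (x : M) ∈ U i j ⊓ U i' j' ⊓ LinearMap.ker φ := ⟨x.2, hx⟩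
      rw [h0, Submodule.mem_bot] at this
      exact Subtype.ext this
    have := LinearMap.finrank_le_finrank_of_injective hinj
    simp at this
    omega

lemma finrank_baseChange_submodule {F M : Type*} (K : Type*) [Field F] [Field K] [Algebra F K]
    [AddCommGroup M] [Module F M] (U : Submodule F M) :
    finrank K (U.baseChange K) = finrank F U := by
  rw [← (Submodule.toBaseChange.toLinearEquiv K U).finrank_eq, Module.finrank_baseChange]

/-- Extension of scalars preserves the dimension of an intersection, since it preserves the
dimensions of the two subspaces and of their sum. -/
lemma finrank_inf_baseChange {F M : Type*} (K : Type*) [Field F] [Field K] [Algebra F K]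
    [AddCommGroup M] [Module F M] (U V : Submodule F M) [FiniteDimensional F U]
    [FiniteDimensional F V] :
    finrank K ↥(U.baseChange K ⊓ V.baseChange K) = finrank F ↥(U ⊓ V) := by
  have hU : FiniteDimensional K (U.baseChange K) :=
    Module.Finite.equiv (Submodule.toBaseChange.toLinearEquiv K U)
  have hV : FiniteDimensional K (V.baseChange K) :=
    Module.Finite.equiv (Submodule.toBaseChange.toLinearEquiv K V)
  have hsup : (U ⊔ V).baseChange K = U.baseChange K ⊔ V.baseChange K := by
    simp only [Submodule.baseChange_eq_span, Submodule.map_sup, ← Submodule.span_union]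
    refine le_antisymm ?_ ?_
    · refine Submodule.span_le.2 fun x hx => ?_
      obtain ⟨y, hy, z, hz, rfl⟩ := Submodule.mem_sup.1 hx
      exact add_mem (Submodule.subset_span (Or.inl hy)) (Submodule.subset_span (Or.inr hz))
    · refine Submodule.span_mono (Set.union_subset ?_ ?_)
      · exact fun x hx => Submodule.mem_sup_left hx
      · exact fun x hx => Submodule.mem_sup_right hx
  have h1 := Submodule.finrank_sup_add_finrank_inf_eq (U.baseChange K) (V.baseChange K)
  have h2 := Submodule.finrank_sup_add_finrank_inf_eq U V
  rw [← hsup] at h1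
  simp only [finrank_baseChange_submodule] at h1
  omega

lemma prod_pairs_mul {k : ℕ} (f : Fin k → ℕ) :
    ∏ p ∈ Finset.univ.filter (fun p : Fin k × Fin k => p.1 < p.2), (f p.1 * f p.2) =
      (∏ r, f r) ^ (k - 1) := by
  have hswap : ∏ p ∈ Finset.univ.filter (fun p : Fin k × Fin k => p.1 < p.2), f p.2 =
      ∏ p ∈ Finset.univ.filter (fun p : Fin k × Fin k => p.2 < p.1), f p.1 :=
    Finset.prod_bij' (fun p _ => p.swap) (fun p _ => p.swap) (by simp) (by simp) (by simp)
      (by simp) (by simp)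
  have hdisj : Disjoint (Finset.univ.filter (fun p : Fin k × Fin k => p.1 < p.2))
      (Finset.univ.filter (fun p : Fin k × Fin k => p.2 < p.1)) := by
    rw [Finset.disjoint_filter]
    intro p _ h
    exact h.asymm
  rw [Finset.prod_mul_distrib, hswap, ← Finset.prod_union hdisj, ← Finset.filter_or,
    Finset.prod_filter, Fintype.prod_prod_type, ← Finset.prod_pow]
  refine Finset.prod_congr rfl fun a _ => ?_
  rw [← Finset.prod_filter]
  dsimp only
  rw [Finset.prod_const]
  congr 1
  have : (Finset.univ.filter fun b : Fin k => a < b ∨ b < a) = Finset.univ.erase a := by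
    ext b
    simp [eq_comm]
  simp only [this]
  simp

/-- Threshold version of the second remedy, for subspaces. -/
theorem einstein_second_remedy_threshold {F : Type*} [Field F]
    {M : Type*} [AddCommGroup M] [Module F M]
    (k m t : ℕ) (ℓ : Fin k → ℕ) (hℓ : ∀ r, 0 < ℓ r) (hℓt : ∀ r, t ≤ ℓ r)
    (U : Fin m → Fin k → Submodule F M)
    (hfd : ∀ i j, FiniteDimensional F (U i j))
    (hdim : ∀ i j, Module.finrank F (U i j) ≤ ℓ j)
    (hthr : ∀ i, ∀ j j' : Fin k, j ≠ j' → Module.finrank F ↥(U i j ⊓ U i j') ≤ t)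
    (hcross : ∀ i i' : Fin m, i < i' →
      ∃ j j' : Fin k, j < j' ∧ t < Module.finrank F ↥(U i j ⊓ U i' j')) :
    m ≤ (∏ p ∈ Finset.univ.filter (fun p : Fin k × Fin k => p.1 < p.2),
          (ℓ p.1 + ℓ p.2 - 2 * t).factorial) /
        (∏ r, (ℓ r - t).factorial) ^ (k - 1) := by
  have hmain := le_prod_choose_threshold (K := AlgebraicClosure F) t ℓ
    (fun i j => (U i j).baseChange (AlgebraicClosure F))
    (fun i j => Module.Finite.equiv (Submodule.toBaseChange.toLinearEquiv _ (U i j)))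
    (fun i j => by rw [finrank_baseChange_submodule]; exact hdim i j)
    (fun i j j' hj => by rw [finrank_inf_baseChange]; exact hthr i j j' hj)
    (fun i i' hi => by simpa only [finrank_inf_baseChange] using hcross i i' hi)
  rw [← Finset.prod_subtype (Finset.univ.filter (fun p : Fin k × Fin k => p.1 < p.2))
    (by simp) (fun p => ((ℓ p.1 - t) + (ℓ p.2 - t)).choose (ℓ p.1 - t))] at hmain
  rw [Nat.le_div_iff_mul_le (pow_pos (Finset.prod_pos fun r _ => Nat.factorial_pos _) _),
    ← prod_pairs_mul]
  refine (Nat.mul_le_mul_right _ hmain).trans_eq ?_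
  rw [← Finset.prod_mul_distrib]
  refine Finset.prod_congr rfl fun p _ => ?_
  have h1 := hℓt p.1
  have h2 := hℓt p.2
  rw [show ℓ p.1 + ℓ p.2 - 2 * t = (ℓ p.1 - t) + (ℓ p.2 - t) by omega, ← mul_assoc]
  rw [Nat.choose_symm_add]
  exact Nat.add_choose_mul_factorial_mul_factorial _ _
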